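/- arXiv:1010.5077 — 2 statements merged into one kernel-verified Lean document; each statement's English description precedes it below -/
import Mathlib

section
/- Let c ∈ SL(3,ℤ) be the permutation matrix of the 3-cycle e₁ ↦ e₂ ↦ e₃ ↦ e₁ (which has determinant 1). Then Σ ∩ cΣc⁻¹ ∩ c²Σc⁻² equals the subgroup of diagonal matrices in SL(3,ℤ), i.e. the matrices diag(ε₁,ε₂,ε₃) with εᵢ ∈ {±1} and ε₁ε₂ε₃ = 1; in particular this intersection of three conjugates of Σ is a finite group (of order 4). -/
open Matrix

/-- `Σ < SL(3,ℤ)`: the subgroup of matrices `g` with `g₃₁ = g₃₂ = 0`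
(third row, first and second columns). -/
def Sigma3 : Subgroup (Matrix.SpecialLinearGroup (Fin 3) ℤ) where
  carrier := {g | g.1 2 0 = 0 ∧ g.1 2 1 = 0}
  one_mem' := by simp
  mul_mem' := by
    rintro a b ⟨ha0, ha1⟩ ⟨hb0, hb1⟩
    constructor <;>
      simp [Matrix.SpecialLinearGroup.coe_mul, Matrix.mul_apply, Fin.sum_univ_three,
        ha0, ha1, hb0, hb1]
  inv_mem' := by
    rintro a ⟨ha0, ha1⟩
    constructor <;>
      simp [Matrix.SpecialLinearGroup.coe_inv, Matrix.adjugate_fin_three, ha0, ha1]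

/-- `P ≤ Σ`: the subgroup of matrices `[[1,0,x],[0,1,y],[0,0,1]]` with `x, y ∈ ℤ`. -/
def P3 : Subgroup (Matrix.SpecialLinearGroup (Fin 3) ℤ) where
  carrier := {g | ∃ x y : ℤ, g.1 = !![1, 0, x; 0, 1, y; 0, 0, 1]}
  one_mem' := ⟨0, 0, by
    ext i j
    fin_cases i <;> fin_cases j <;>
      simp [Matrix.vecHead, Matrix.vecTail]⟩
  mul_mem' := by
    rintro a b ⟨x, y, ha⟩ ⟨x', y', hb⟩
    refine ⟨x + x', y + y', ?_⟩
    have : a.1 * b.1 = !![1, 0, x + x'; 0, 1, y + y'; 0, 0, 1] := by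
      rw [ha, hb]
      ext i j
      fin_cases i <;> fin_cases j <;>
        simp [Matrix.mul_apply, Fin.sum_univ_three, Matrix.vecHead, Matrix.vecTail, add_comm]
    simpa using this
  inv_mem' := by
    rintro a ⟨x, y, ha⟩
    refine ⟨-x, -y, ?_⟩
    rw [Matrix.SpecialLinearGroup.coe_inv, ha]
    ext i j
    fin_cases i <;> fin_cases j <;>
      simp [Matrix.adjugate_fin_three, Matrix.vecHead, Matrix.vecTail]

/-- The permutation matrix `c ∈ SL(3,ℤ)` of the 3-cycle `e₁ ↦ e₂ ↦ e₃ ↦ e₁`. -/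
def cMat : Matrix.SpecialLinearGroup (Fin 3) ℤ :=
  ⟨!![0, 0, 1; 1, 0, 0; 0, 1, 0], by rw [Matrix.det_fin_three]; rfl⟩

/-- The intersection `Σ ∩ cΣc⁻¹ ∩ c²Σc⁻²`. -/
def K8 : Subgroup (Matrix.SpecialLinearGroup (Fin 3) ℤ) :=
  Sigma3 ⊓ Sigma3.map (MulAut.conj cMat).toMonoidHom ⊓
    Sigma3.map (MulAut.conj (cMat ^ 2)).toMonoidHom

/-! Conjugating by the matrix of a permutation `σ` permutes rows and columns simultaneously, so it
turns the defining condition of `Σ` (row `3` vanishes off the diagonal) into the same condition on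
row `σ 3`. As the powers of the `3`-cycle carry `3` to every index, the intersection consists of the
diagonal matrices. Those in `SL(n,R)` form the kernel of the product map `(Rˣ)ⁿ → Rˣ`, which is
onto for `n ≥ 1`; for `R = ℤ` and `n = 3` this kernel has `2³ / 2 = 4` elements. -/

/-- The product homomorphism `Mⁿ → M` of a commutative monoid, with `n` an arbitrary finite index
type. For `M = Rˣ` its kernel parametrizes the diagonal matrices of determinant one. -/
def piProdHom (n M : Type*) [Fintype n] [CommMonoid M] : (n → M) →* M :=
  ∏ i, Pi.evalMonoidHom (fun _ => M) i

section PiProdHom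

variable {n M G : Type*} [Fintype n] [CommMonoid M] [CommGroup G]

theorem piProdHom_apply (x : n → M) : piProdHom n M x = ∏ i, x i := by
  simp [piProdHom]

theorem piProdHom_surjective [Nonempty n] : Function.Surjective (piProdHom n M) := by
  classical
  obtain ⟨i⟩ := ‹Nonempty n›
  intro x
  exact ⟨Pi.mulSingle i x, by rw [piProdHom_apply, Fintype.prod_pi_mulSingle']⟩

theorem card_ker_piProdHom_mul_card [Nonempty n] :
    Nat.card (piProdHom n G).ker * Nat.card G = Nat.card G ^ Fintype.card n := by
  have index_ker : (piProdHom n G).ker.index = Nat.card G := by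
    rw [Subgroup.index_ker, MonoidHom.range_eq_top.mpr piProdHom_surjective, Subgroup.card_top]
  rw [← index_ker, Subgroup.card_mul_index, index_ker, Nat.card_fun,
    Nat.card_eq_fintype_card (α := n)]

end PiProdHom

/-- The homomorphism `ε ↦ diag(ε)` onto the diagonal matrices of `SL(n,R)`. Its source is the group
of families of units with product one. -/
def diagonalSL (n R : Type*) [Fintype n] [DecidableEq n] [CommRing R] :
    (piProdHom n Rˣ).ker →* Matrix.SpecialLinearGroup n R where
  toFun ε := ⟨diagonal fun i => (ε.1 i : R), by
    rw [det_diagonal, ← Units.coe_prod, ← piProdHom_apply, MonoidHom.mem_ker.mp ε.2, Units.val_one]⟩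
  map_one' := Subtype.ext (by simp)
  map_mul' _ _ := Subtype.ext (diagonal_mul_diagonal _ _).symm

section SpecialLinearGroup

variable {n R : Type*} [Fintype n] [DecidableEq n] [CommRing R]

theorem diagonalSL_injective : Function.Injective (diagonalSL n R) := by
  intro ε δ h
  have h_diag := diagonal_injective (congrArg Subtype.val h)
  exact Subtype.ext (funext fun i => Units.ext (congrFun h_diag i))

theorem prod_diag_eq_one_of_isDiag {g : Matrix.SpecialLinearGroup n R} (hg : g.1.IsDiag) :
    ∏ i, g.1.diag i = 1 := by
  rw [← det_diagonal, hg.diagonal_diag, g.2]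

theorem isUnit_diag_of_isDiag {g : Matrix.SpecialLinearGroup n R} (hg : g.1.IsDiag) (i : n) :
    IsUnit (g.1.diag i) :=
  isUnit_of_dvd_one ((Finset.dvd_prod_of_mem _ (Finset.mem_univ i)).trans
    (prod_diag_eq_one_of_isDiag hg).dvd)

theorem mem_range_diagonalSL_iff_isDiag {g : Matrix.SpecialLinearGroup n R} :
    g ∈ (diagonalSL n R).range ↔ g.1.IsDiag := by
  constructor
  · rintro ⟨ε, rfl⟩
    exact isDiag_diagonal _
  · intro hg
    choose ε hε using isUnit_diag_of_isDiag hg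
    have hε_ker : ε ∈ (piProdHom n Rˣ).ker := by
      rw [MonoidHom.mem_ker, piProdHom_apply, Units.ext_iff, Units.coe_prod, Units.val_one]
      simpa only [hε] using prod_diag_eq_one_of_isDiag hg
    refine ⟨⟨ε, hε_ker⟩, Subtype.ext ?_⟩
    rw [← hg.diagonal_diag]
    exact congrArg diagonal (funext hε)

theorem card_range_diagonalSL_mul_card_units [Nonempty n] :
    Nat.card (diagonalSL n R).range * Nat.card Rˣ = Nat.card Rˣ ^ Fintype.card n := by
  rw [← Nat.card_congr (MonoidHom.ofInjective diagonalSL_injective).toEquiv,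
    card_ker_piProdHom_mul_card]

theorem isDiag_iff_exists_signs {g : Matrix.SpecialLinearGroup n ℤ} :
    g.1.IsDiag ↔
      ∃ ε : n → ℤ, (∀ i, ε i = 1 ∨ ε i = -1) ∧ ∏ i, ε i = 1 ∧ g.1 = diagonal ε := by
  constructor
  · intro hg
    exact ⟨g.1.diag, fun i => Int.isUnit_iff.mp (isUnit_diag_of_isDiag hg i),
      prod_diag_eq_one_of_isDiag hg, hg.diagonal_diag.symm⟩
  · rintro ⟨ε, -, -, hε⟩
    exact hε ▸ isDiag_diagonal ε

-- Since `permMatrix σ` maps `e_{σ j}` to `e_j`, the matrix of `e_j ↦ e_{σ j}` is `permMatrix σ⁻¹`.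
theorem permMatrix_inv_mulVec_single (σ : Equiv.Perm n) (j : n) :
    σ⁻¹.permMatrix R *ᵥ Pi.single j 1 = Pi.single (σ j) 1 := by
  rw [permMatrix_mulVec]
  ext i
  simp [Pi.single_apply, Equiv.symm_apply_eq]

theorem coe_inv_mul_mul_eq_submatrix {s : Matrix.SpecialLinearGroup n R} {σ : Equiv.Perm n}
    (hs : s.1 = σ⁻¹.permMatrix R) (g : Matrix.SpecialLinearGroup n R) :
    (s⁻¹ * g * s).1 = g.1.submatrix σ σ := by
  have h_intertwine : g.1 * s.1 = s.1 * g.1.submatrix σ σ := by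
    rw [hs, Equiv.Perm.permMatrix, PEquiv.mul_toMatrix_toPEquiv, PEquiv.toMatrix_toPEquiv_mul,
      Equiv.Perm.inv_def, Equiv.symm_symm]
    ext i j
    simp only [submatrix_apply, id_eq, Equiv.apply_symm_apply]
  calc (s⁻¹ * g * s).1 = (s⁻¹).1 * (g.1 * s.1) := by
        rw [mul_assoc, Matrix.SpecialLinearGroup.coe_mul, Matrix.SpecialLinearGroup.coe_mul]
    _ = (s⁻¹ * s).1 * g.1.submatrix σ σ := by
        rw [h_intertwine, Matrix.SpecialLinearGroup.coe_mul, Matrix.mul_assoc]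
    _ = g.1.submatrix σ σ := by
        rw [inv_mul_cancel, Matrix.SpecialLinearGroup.coe_one, Matrix.one_mul]

end SpecialLinearGroup

theorem mem_Sigma3_iff {g : Matrix.SpecialLinearGroup (Fin 3) ℤ} :
    g ∈ Sigma3 ↔ ∀ j ≠ 2, g.1 2 j = 0 := by
  change g.1 2 0 = 0 ∧ g.1 2 1 = 0 ↔ _
  simp [Fin.forall_fin_succ]

theorem mem_map_conj_Sigma3_iff {s g : Matrix.SpecialLinearGroup (Fin 3) ℤ} {σ : Equiv.Perm (Fin 3)}
    (hs : s.1 = σ⁻¹.permMatrix ℤ) :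
    g ∈ Sigma3.map (MulAut.conj s).toMonoidHom ↔ ∀ j ≠ σ 2, g.1 (σ 2) j = 0 := by
  rw [Subgroup.mem_map_equiv, MulAut.conj_symm_apply, mem_Sigma3_iff,
    coe_inv_mul_mul_eq_submatrix hs, ← σ.forall_congr_right (q := fun j => j ≠ σ 2 → _)]
  simp only [submatrix_apply, σ.injective.ne_iff]

theorem coe_cMat : cMat.1 = (finRotate 3)⁻¹.permMatrix ℤ := by
  decide

theorem coe_cMat_sq : (cMat ^ 2).1 = (finRotate 3 ^ 2)⁻¹.permMatrix ℤ := by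
  rw [Matrix.SpecialLinearGroup.coe_pow, coe_cMat, pow_two, ← permMatrix_mul, ← pow_two, inv_pow]

theorem cMat_mulVec_single (j : Fin 3) :
    cMat.1 *ᵥ Pi.single j 1 = Pi.single (j + 1) 1 := by
  rw [coe_cMat, permMatrix_inv_mulVec_single, finRotate_apply]

theorem mem_K8_iff_isDiag {g : Matrix.SpecialLinearGroup (Fin 3) ℤ} : g ∈ K8 ↔ g.1.IsDiag := by
  have h_rotate : finRotate 3 2 = 0 := rfl
  have h_rotate_sq : (finRotate 3 ^ 2) 2 = 1 := rfl
  have h_rows : g.1.IsDiag ↔ ∀ i, ∀ j ≠ i, g.1 i j = 0 :=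
    forall₂_congr fun i j => by rw [ne_comm]
  rw [K8, Subgroup.mem_inf, Subgroup.mem_inf, mem_Sigma3_iff, mem_map_conj_Sigma3_iff coe_cMat,
    mem_map_conj_Sigma3_iff coe_cMat_sq, h_rotate, h_rotate_sq, h_rows]
  constructor
  · rintro ⟨⟨row_two, row_zero⟩, row_one⟩ i
    fin_cases i
    exacts [row_zero, row_one, row_two]
  · exact fun row => ⟨⟨row 2, row 0⟩, row 1⟩

theorem K8_eq_range_diagonalSL : K8 = (diagonalSL (Fin 3) ℤ).range :=
  Subgroup.ext fun _ => mem_K8_iff_isDiag.trans mem_range_diagonalSL_iff_isDiag.symm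

theorem finite_K8 : (K8 : Set (Matrix.SpecialLinearGroup (Fin 3) ℤ)).Finite := by
  rw [K8_eq_range_diagonalSL, MonoidHom.coe_range]
  exact Set.finite_range _

theorem card_K8 : Nat.card K8 = 4 := by
  have h_card := card_range_diagonalSL_mul_card_units (n := Fin 3) (R := ℤ)
  rw [← K8_eq_range_diagonalSL, Nat.card_eq_fintype_card (α := ℤˣ), Fintype.card_units_int,
    Fintype.card_fin] at h_card
  lia

/-- `c` is the permutation matrix sending `e₁ ↦ e₂ ↦ e₃ ↦ e₁`, and
`Σ ∩ cΣc⁻¹ ∩ c²Σc⁻²` equals the subgroup of diagonal matrices of `SL(3,ℤ)`, i.e. the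
matrices `diag(ε₁,ε₂,ε₃)` with `εᵢ ∈ {±1}` and `ε₁ε₂ε₃ = 1`; in particular this
intersection of three conjugates of `Σ` is a finite group of order `4`. -/
theorem stmt8 :
    cMat.1.mulVec (Pi.single 0 1) = (Pi.single 1 1 : Fin 3 → ℤ) ∧
    cMat.1.mulVec (Pi.single 1 1) = (Pi.single 2 1 : Fin 3 → ℤ) ∧
    cMat.1.mulVec (Pi.single 2 1) = (Pi.single 0 1 : Fin 3 → ℤ) ∧
    (∀ g : Matrix.SpecialLinearGroup (Fin 3) ℤ,
      g ∈ K8 ↔ ∀ i j, i ≠ j → g.1 i j = 0) ∧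
    (∀ g : Matrix.SpecialLinearGroup (Fin 3) ℤ,
      g ∈ K8 ↔ ∃ ε : Fin 3 → ℤ,
        (∀ i, ε i = 1 ∨ ε i = -1) ∧ ε 0 * ε 1 * ε 2 = 1 ∧ g.1 = Matrix.diagonal ε) ∧
    (K8 : Set (Matrix.SpecialLinearGroup (Fin 3) ℤ)).Finite ∧
    Nat.card K8 = 4 := by
  refine ⟨cMat_mulVec_single 0, cMat_mulVec_single 1, cMat_mulVec_single 2,
    fun g => mem_K8_iff_isDiag, fun g => ?_, finite_K8, card_K8⟩
  rw [mem_K8_iff_isDiag, isDiag_iff_exists_signs]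
  simp only [Fin.prod_univ_three]
end

section
/- There exist finitely many elements g₁, …, g_m ∈ SL(n,ℤ) such that the intersection g₁ Σ g₁⁻¹ ∩ ⋯ ∩ g_m Σ g_m⁻¹ of the corresponding conjugates of Σ is a finite group. -/
open Matrix

/-- For `g ∈ SL(n,ℤ)`, the coercion of `g⁻¹` is the nonsingular inverse of the
coercion of `g`. -/
lemma slCoeInv {n : ℕ} (g : Matrix.SpecialLinearGroup (Fin n) ℤ) :
    (g⁻¹).1 = (g.1)⁻¹ := by
  rw [Matrix.SpecialLinearGroup.coe_inv, Matrix.inv_def, g.2, Ring.inverse_one, one_smul]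

/-- `Σ ≤ SL(n,ℤ)`: the subgroup of block upper triangular matrices (with respect to the
block structure given by `β : Fin n → Fin r`, assigning to each index its block), i.e.
matrices all of whose entries below the diagonal blocks vanish. -/
def SigmaB {n r : ℕ} (β : Fin n → Fin r) :
    Subgroup (Matrix.SpecialLinearGroup (Fin n) ℤ) where
  carrier := {g | g.1.BlockTriangular β}
  one_mem' := Matrix.blockTriangular_one
  mul_mem' := by
    intro a b ha hb
    show (a * b).1.BlockTriangular β
    rw [Matrix.SpecialLinearGroup.coe_mul]
    exact ha.mul hb
  inv_mem' := by
    intro g hg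
    have : Invertible g.1 := g.1.invertibleOfIsUnitDet (by rw [g.2]; exact isUnit_one)
    show (g⁻¹).1.BlockTriangular β
    rw [slCoeInv]
    exact Matrix.blockTriangular_inv_of_blockTriangular hg

/-- `G ≤ SL(n,ℤ)`: the subgroup of block diagonal matrices, i.e. matrices all of whose
entries outside the diagonal blocks vanish. -/
def GB {n r : ℕ} (β : Fin n → Fin r) :
    Subgroup (Matrix.SpecialLinearGroup (Fin n) ℤ) where
  carrier := {g | ∀ i j, β i ≠ β j → g.1 i j = 0}
  one_mem' := fun i j hij => Matrix.one_apply_ne (fun e => hij (congrArg β e))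
  mul_mem' := by
    intro a b ha hb i j hij
    have ha' : a.1.BlockTriangular β := fun k l h => ha k l (ne_of_gt h)
    have ha'' : a.1.BlockTriangular (OrderDual.toDual ∘ β) :=
      fun k l h => ha k l (ne_of_lt h)
    have hb' : b.1.BlockTriangular β := fun k l h => hb k l (ne_of_gt h)
    have hb'' : b.1.BlockTriangular (OrderDual.toDual ∘ β) :=
      fun k l h => hb k l (ne_of_lt h)
    have h1 := ha'.mul hb'
    have h2 := ha''.mul hb''
    rcases hij.lt_or_gt with h | h
    · exact (Matrix.SpecialLinearGroup.coe_mul a b) ▸ h2 h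
    · exact (Matrix.SpecialLinearGroup.coe_mul a b) ▸ h1 h
  inv_mem' := by
    intro g hg i j hij
    have : Invertible g.1 := g.1.invertibleOfIsUnitDet (by rw [g.2]; exact isUnit_one)
    have hg' : g.1.BlockTriangular β := fun k l h => hg k l (ne_of_gt h)
    have hg'' : g.1.BlockTriangular (OrderDual.toDual ∘ β) :=
      fun k l h => hg k l (ne_of_lt h)
    have h1 := Matrix.blockTriangular_inv_of_blockTriangular hg'
    have h2 := Matrix.blockTriangular_inv_of_blockTriangular hg''
    show (g⁻¹).1 i j = 0
    rw [slCoeInv]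
    rcases hij.lt_or_gt with h | h
    · exact h2 h
    · exact h1 h

/-- Multiplying a block upper triangular matrix whose diagonal blocks are identity
matrices with a block upper triangular matrix does not change the entries inside the
diagonal blocks. -/
lemma keyB {n r : ℕ} {β : Fin n → Fin r} {a c : Matrix (Fin n) (Fin n) ℤ}
    (ha1 : a.BlockTriangular β)
    (ha2 : ∀ i j, β i = β j → a i j = (1 : Matrix (Fin n) (Fin n) ℤ) i j)
    (hc : c.BlockTriangular β) {i j : Fin n} (hij : β i = β j) :
    (a * c) i j = c i j := by
  rw [Matrix.mul_apply, Finset.sum_eq_single i]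
  · rw [ha2 i i rfl, Matrix.one_apply_eq, one_mul]
  · intro k _ hk
    rcases lt_trichotomy (β k) (β i) with h | h | h
    · rw [ha1 h, zero_mul]
    · rw [ha2 i k h.symm, Matrix.one_apply_ne (Ne.symm hk), zero_mul]
    · rw [hc (hij ▸ h), mul_zero]
  · intro h
    exact absurd (Finset.mem_univ i) h

/-! Conjugating the block triangular group of `β` by a monomial matrix with permutation `σ` gives
the block triangular group of `β ∘ σ`, and every permutation underlies a monomial matrix of
determinant one. If `β` is not constant then, permutations being doubly transitive, each
off-diagonal position lies strictly below the diagonal blocks for some `β ∘ σ`. So the intersection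
of these conjugates consists of diagonal matrices; their entries are units, which leaves finitely
many when the ring has finitely many units. -/

lemma specialLinearGroup_coe_inv {ι R : Type*} [Fintype ι] [DecidableEq ι] [CommRing R]
    (g : SpecialLinearGroup ι R) : (g⁻¹).1 = (g.1)⁻¹ :=
  (inv_eq_left_inv (congrArg Subtype.val (inv_mul_cancel g))).symm

/-- The group of block triangular matrices of determinant one over any commutative ring, with blocks
the fibres of an arbitrary function `β` to a linear order; these need not be consecutive. For
integer matrices indexed by `Fin n` this is `SigmaB β`. -/
def blockTriangularSubgroup {ι α : Type*} [Fintype ι] [DecidableEq ι] [LinearOrder α]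
    (R : Type*) [CommRing R] (β : ι → α) : Subgroup (SpecialLinearGroup ι R) where
  carrier := {g | g.1.BlockTriangular β}
  one_mem' := blockTriangular_one
  mul_mem' := BlockTriangular.mul
  inv_mem' {g} hg := by
    have : Invertible g.1 := g.1.invertibleOfIsUnitDet (by rw [g.det_coe]; exact isUnit_one)
    change (g⁻¹).1.BlockTriangular β
    rw [specialLinearGroup_coe_inv]
    exact blockTriangular_inv_of_blockTriangular hg

section Monomial

variable {ι R : Type*} [Fintype ι] [DecidableEq ι] [CommRing R]

lemma exists_specialLinearGroup_coe_eq_diagonal_mul_permMatrix [Nonempty ι]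
    (σ : Equiv.Perm ι) :
    ∃ (g : SpecialLinearGroup ι R) (d : ι → Rˣ),
      g.1 = diagonal (fun i ↦ (d i : R)) * σ.permMatrix R := by
  obtain ⟨i₀⟩ := ‹Nonempty ι›
  let ε : Rˣ := Units.map (Int.castRingHom R) (Equiv.Perm.sign σ)
  let d : ι → Rˣ := Pi.mulSingle i₀ ε
  have prod_d : ∏ i, (d i : R) = ε := by
    rw [← Units.coe_prod, Fintype.prod_pi_mulSingle']
  have hdet : (diagonal (fun i ↦ (d i : R)) * σ.permMatrix R).det = 1 := by
    have sign_sq : ε * ε = 1 := by rw [← map_mul, Int.units_mul_self, map_one]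
    rw [det_mul, det_diagonal, prod_d, det_permutation]
    exact congrArg Units.val sign_sq
  exact ⟨⟨_, hdet⟩, d, rfl⟩

lemma diagonal_mul_permMatrix_mul_apply (d : ι → R) (σ : Equiv.Perm ι) (A : Matrix ι ι R)
    (i j : ι) : (diagonal d * σ.permMatrix R * A) i j = d i * A (σ i) j := by
  rw [Matrix.mul_assoc, diagonal_mul, PEquiv.toMatrix_toPEquiv_mul, submatrix_apply, id]

lemma mul_diagonal_mul_permMatrix_apply (d : ι → R) (σ : Equiv.Perm ι) (A : Matrix ι ι R)
    (i j : ι) : (A * (diagonal d * σ.permMatrix R)) i (σ j) = A i j * d j := by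
  rw [← Matrix.mul_assoc, PEquiv.mul_toMatrix_toPEquiv, submatrix_apply, id,
    Equiv.symm_apply_apply, mul_diagonal]

lemma map_conj_blockTriangularSubgroup_of_eq_diagonal_mul_permMatrix {α : Type*} [LinearOrder α]
    (β : ι → α) {g : SpecialLinearGroup ι R} {d : ι → Rˣ} {σ : Equiv.Perm ι}
    (hg : g.1 = diagonal (fun i ↦ (d i : R)) * σ.permMatrix R) :
    (blockTriangularSubgroup R β).map (MulAut.conj g).toMonoidHom =
      blockTriangularSubgroup R (β ∘ σ) := by
  ext x
  rw [Subgroup.mem_map_equiv, MulAut.conj_symm_apply]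
  set y := g⁻¹ * x * g with hy
  have hgy : g.1 * y.1 = x.1 * g.1 := congrArg Subtype.val (show g * y = x * g by rw [hy]; group)
  have entry_eq (i j : ι) : d i * y.1 (σ i) (σ j) = x.1 i j * d j := by
    rw [← diagonal_mul_permMatrix_mul_apply (fun i ↦ (d i : R)), ← hg, hgy, hg,
      mul_diagonal_mul_permMatrix_apply]
  have entry_eq_zero_iff (i j : ι) : y.1 (σ i) (σ j) = 0 ↔ x.1 i j = 0 := by
    rw [← (d i).mul_right_eq_zero, entry_eq, (d j).mul_left_eq_zero]
  calc y ∈ blockTriangularSubgroup R β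
      ↔ ∀ i j, β j < β i → y.1 i j = 0 := Iff.rfl
    _ ↔ ∀ i j, β (σ j) < β (σ i) → y.1 (σ i) (σ j) = 0 := σ.surjective.forall₂
    _ ↔ ∀ i j, β (σ j) < β (σ i) → x.1 i j = 0 := by simp only [entry_eq_zero_iff]
    _ ↔ x ∈ blockTriangularSubgroup R (β ∘ σ) := Iff.rfl

end Monomial

lemma isDiag_of_forall_perm_blockTriangular {ι α R : Type*} [Zero R] [Preorder α] {β : ι → α}
    {a b : ι} (hab : β a < β b) {A : Matrix ι ι R}
    (hA : ∀ σ : Equiv.Perm ι, A.BlockTriangular (β ∘ σ)) : A.IsDiag := by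
  intro i j hij
  have hba : b ≠ a := ne_of_apply_ne β hab.ne'
  obtain ⟨σ, rfl, rfl⟩ : ∃ σ : Equiv.Perm ι, σ • i = b ∧ σ • j = a :=
    MulAction.is_two_pretransitive_iff.1 (Equiv.Perm.isMultiplyPretransitive ι 2) hij hba
  exact hA σ hab

lemma finite_setOf_specialLinearGroup_isDiag (ι R : Type*) [Fintype ι] [DecidableEq ι]
    [CommRing R] [Finite Rˣ] : {x : SpecialLinearGroup ι R | x.1.IsDiag}.Finite := by
  have finite_unit_diagonals :
      (Set.range fun u : ι → Rˣ ↦ diagonal fun i ↦ (u i : R)).Finite := Set.finite_range _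
  refine (finite_unit_diagonals.preimage Subtype.val_injective.injOn).subset
    fun (x : SpecialLinearGroup ι R) hx ↦ ?_
  have diag_unit : IsUnit x.1.diag := by
    rw [← isUnit_diagonal, hx.diagonal_diag, isUnit_iff_isUnit_det, x.det_coe]
    exact isUnit_one
  choose u hu using Pi.isUnit_iff.1 diag_unit
  exact ⟨u, (congrArg diagonal (funext hu)).trans hx.diagonal_diag⟩

theorem stmt11_general {ι α R : Type*} [Fintype ι] [DecidableEq ι] [LinearOrder α] [CommRing R]
    [Finite Rˣ] {β : ι → α} (hβ : (Set.range β).Nontrivial) :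
    ∃ (N : ℕ) (g : Fin N → SpecialLinearGroup ι R), 0 < N ∧
      ((⨅ i : Fin N, (blockTriangularSubgroup R β).map (MulAut.conj (g i)).toMonoidHom :
        Subgroup (SpecialLinearGroup ι R)) : Set (SpecialLinearGroup ι R)).Finite := by
  obtain ⟨_, ⟨a, rfl⟩, _, ⟨b, rfl⟩, hab⟩ := hβ.exists_lt
  have : Nonempty ι := ⟨a⟩
  choose g d hg using
    exists_specialLinearGroup_coe_eq_diagonal_mul_permMatrix (ι := ι) (R := R)
  let e := Fintype.equivFin (Equiv.Perm ι)
  refine ⟨Fintype.card (Equiv.Perm ι), g ∘ e.symm, Fintype.card_pos,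
    (finite_setOf_specialLinearGroup_isDiag ι R).subset fun x hx ↦ ?_⟩
  refine isDiag_of_forall_perm_blockTriangular hab fun σ ↦ ?_
  have hxσ := Subgroup.mem_iInf.1 hx (e σ)
  rwa [Function.comp_apply, e.symm_apply_apply,
    map_conj_blockTriangularSubgroup_of_eq_diagonal_mul_permMatrix β (hg σ)] at hxσ

lemma surjective_of_forall_mem_Ico_sum {α : Type*} [Fintype α] [Preorder α] [DecidableLT α]
    [DecidableLE α] {n : ℕ} {m : α → ℕ} (hm : ∀ b, 0 < m b) (hsum : ∑ b, m b ≤ n) {β : Fin n → α}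
    (hβ : ∀ (i : Fin n) b, ∑ k with k < b, m k ≤ (i : ℕ) ∧ (i : ℕ) < ∑ k with k ≤ b, m k →
      β i = b) :
    Function.Surjective β := by
  intro b
  have start_lt_end : ∑ k with k < b, m k < ∑ k with k ≤ b, m k :=
    Finset.sum_lt_sum_of_subset (Finset.monotone_filter_right _ fun _ _ ↦ le_of_lt)
      (by simp) (by simp) (hm b) fun _ _ _ ↦ Nat.zero_le _
  have end_le : ∑ k with k ≤ b, m k ≤ n :=
    (Finset.sum_le_sum_of_subset (Finset.filter_subset _ _)).trans hsum
  exact ⟨⟨_, start_lt_end.trans_le end_le⟩, hβ _ _ ⟨le_rfl, start_lt_end⟩⟩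

/-- There exist finitely many elements `g₁, …, g_m ∈ SL(n,ℤ)` such that
`g₁ Σ g₁⁻¹ ∩ ⋯ ∩ g_m Σ g_m⁻¹` is a finite group, where `Σ ≤ SL(n,ℤ)` is the subgroup of
block upper triangular matrices (with respect to a partition into `r` consecutive blocks
of positive sizes `m₁, …, m_r`, encoded by the block-assignment function `β`). -/
theorem stmt11 (r n : ℕ) (hr : 2 ≤ r) (m : Fin r → ℕ) (hm : ∀ b, 0 < m b)
    (hsum : ∑ b, m b = n) (β : Fin n → Fin r)
    (hβ : ∀ (i : Fin n) (b : Fin r), β i = b ↔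
      (∑ k ∈ Finset.univ.filter (fun k => k < b), m k ≤ (i : ℕ) ∧
        (i : ℕ) < ∑ k ∈ Finset.univ.filter (fun k => k ≤ b), m k)) :
    ∃ (N : ℕ) (g : Fin N → Matrix.SpecialLinearGroup (Fin n) ℤ), 0 < N ∧
      ((⨅ i : Fin N, (SigmaB β).map (MulAut.conj (g i)).toMonoidHom :
          Subgroup (Matrix.SpecialLinearGroup (Fin n) ℤ)) :
        Set (Matrix.SpecialLinearGroup (Fin n) ℤ)).Finite := by
  have : Nontrivial (Fin r) := Fin.nontrivial_iff_two_le.2 hr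
  have surjective_β := surjective_of_forall_mem_Ico_sum hm hsum.le fun i b ↦ (hβ i b).2
  exact stmt11_general (surjective_β.range_eq ▸ Set.nontrivial_univ)
end
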